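/- (Stability of the fourth-order finite difference method, d = 1: l²-bound.) Let α ∈ (0,1) ∪ (1,2), λ ≥ 0, σ ≥ 0, ν > 0 and h > 0. Let J ⊂ ℤ be a finite index set, let u : ℤ → ℝ satisfy u_j = 0 for all j ∉ J, and define for each j ∈ ℤ: (A₀u)_j := (1/(2π))·∫_{−π/h}^{π/h} S_{λ,h}^α(ξ)·ǔ(ξ)·e^{iξjh} dξ with ǔ(ξ) := h·Σ_{k∈ℤ} u_k e^{−iξkh}, and (A₁u)_j := h^{−2}·((1/12)u_{j−2} − (4/3)u_{j−1} + (5/2)u_j − (4/3)u_{j+1} + (1/12)u_{j+2}). Suppose (A₀u)_j + σ·(A₁u)_j + ν·u_j = f_j for all j ∈ J. Then ν²·h·Σ_{j∈ℤ} u_j² ≤ h·Σ_{j∈J} f_j², i.e., ν·‖u‖_{l²} ≤ ‖f‖_{l²(Ω)}. -/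

import Mathlib

open Complex MeasureTheory

/-- Discrete symbol of the fourth-order (p = 4) central finite difference
approximation of `-d²/dx²`. -/
noncomputable def psi4 (h ξ : ℝ) : ℝ :=
  ((1/6) * Real.cos (2*ξ*h) - (8/3) * Real.cos (ξ*h) + 5/2) / h^2

/-- Fourth-order discrete frequency `ξ_h = sign(ξ)·√(ψ_h^{(4)}(ξ))`. -/
noncomputable def xiH (h ξ : ℝ) : ℝ := Real.sign ξ * Real.sqrt (psi4 h ξ)

/-- One-dimensional symbol of the tempered fractional Laplacian. -/
noncomputable def Ssym (α lam ξ : ℝ) : ℂ :=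
  (-1 : ℂ) ^ ⌊α⌋ * (((lam : ℂ) + Complex.I * (ξ : ℂ)) ^ (α : ℂ)
    + ((lam : ℂ) - Complex.I * (ξ : ℂ)) ^ (α : ℂ) - 2 * (lam : ℂ) ^ (α : ℂ))

/-- Fourth-order discrete symbol of the tempered fractional Laplacian. -/
noncomputable def SsymH (α lam h ξ : ℝ) : ℂ := Ssym α lam (xiH h ξ)

/-- Fourth-order discrete tempered fractional Laplacian
`(A₀u)_j = (1/(2π))·∫_{−π/h}^{π/h} S_{λ,h}^α(ξ)·ǔ(ξ)·e^{iξjh} dξ` with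
`ǔ(ξ) = h·Σ_{k∈ℤ} u_k e^{−iξkh}`. -/
noncomputable def A0 (α lam h : ℝ) (u : ℤ → ℝ) (j : ℤ) : ℂ :=
  (1/(2*Real.pi) : ℝ) * ∫ ξ in (-(Real.pi/h))..(Real.pi/h),
    SsymH α lam h ξ * ((h : ℂ) * ∑' k : ℤ,
      (u k : ℂ) * Complex.exp (-(Complex.I * (ξ : ℂ) * (k : ℂ) * (h : ℂ)))) *
      Complex.exp (Complex.I * (ξ : ℂ) * (j : ℂ) * (h : ℂ))

/-- Fourth-order finite difference approximation of `−d²/dx²`. -/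
noncomputable def A1 (h : ℝ) (u : ℤ → ℝ) (j : ℤ) : ℝ :=
  ((1/12) * u (j-2) - (4/3) * u (j-1) + (5/2) * u j - (4/3) * u (j+1) + (1/12) * u (j+2)) / h^2

/-!
With `ǔ(ξ) = h Σ_k u_k e^{-iξkh}`, the operators `A₀` and `A₁` are Fourier multipliers on
`[-π/h, π/h]`, and the quadratic form of the multiplier with symbol `m` is `(1/(2πh)) ∫ m |ǔ|²`.
Both symbols have nonnegative real part, so the real part `w` of `A₀u + σA₁u` satisfies
`⟨u, w⟩ ≥ 0`; expanding the square then gives `‖f‖² = ‖w + νu‖² ≥ ν²‖u‖²`, with sums over `J`.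

Nonnegativity of the fractional symbol compares `Re z^α = |z|^α cos (α arg z)` with
`(Re z)^α = |z|^α (cos (arg z))^α` in the right half-plane.
-/

open scoped ComplexConjugate

theorem cos_rpow_le_cos_mul {α θ : ℝ} (hα₀ : 0 ≤ α) (hα₁ : α ≤ 1) (hθ : |θ| ≤ Real.pi / 2) :
    Real.cos θ ^ α ≤ Real.cos (α * θ) := by
  have hθ' := abs_le.mp hθ
  have hcos : 0 ≤ Real.cos θ := Real.cos_nonneg_of_mem_Icc hθ'
  have hzero : (0 : ℝ) ∈ Set.Icc (-(Real.pi / 2)) (Real.pi / 2) := by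
    constructor <;> linarith [Real.pi_pos]
  calc Real.cos θ ^ α = Real.cos θ ^ α * 1 ^ (1 - α) := by rw [Real.one_rpow, mul_one]
    _ ≤ α * Real.cos θ + (1 - α) * 1 :=
      Real.geom_mean_le_arith_mean2_weighted hα₀ (sub_nonneg.2 hα₁) hcos zero_le_one (by ring)
    _ ≤ Real.cos (α * θ) := by
      simpa using strictConcaveOn_cos_Icc.concaveOn.2 hθ' hzero hα₀ (sub_nonneg.2 hα₁) (by ring)

theorem cos_mul_le_cos_rpow {α θ : ℝ} (hα₁ : 1 ≤ α) (hα₃ : α ≤ 3) (hθ : |θ| ≤ Real.pi / 2) :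
    Real.cos (α * θ) ≤ Real.cos θ ^ α := by
  have hα₀ : 0 < α := by linarith
  have hcos : 0 ≤ Real.cos θ := Real.cos_nonneg_of_mem_Icc (abs_le.mp hθ)
  rcases le_total |α * θ| (Real.pi / 2) with hsmall | hlarge
  · have hcos' : 0 ≤ Real.cos (α * θ) := Real.cos_nonneg_of_mem_Icc (abs_le.mp hsmall)
    have hinv : Real.cos (α * θ) ^ α⁻¹ ≤ Real.cos θ := by
      simpa [hα₀.ne'] using
        cos_rpow_le_cos_mul (inv_nonneg.2 hα₀.le) (inv_le_one_of_one_le₀ hα₁) hsmall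
    exact (Real.rpow_inv_le_iff_of_pos hcos' hcos hα₀).1 hinv
  · have hbound : |α * θ| ≤ Real.pi + Real.pi / 2 := by
      rw [abs_mul, abs_of_pos hα₀]
      calc α * |θ| ≤ 3 * (Real.pi / 2) := by gcongr
        _ = Real.pi + Real.pi / 2 := by ring
    calc Real.cos (α * θ) = Real.cos |α * θ| := (Real.cos_abs _).symm
      _ ≤ 0 := Real.cos_nonpos_of_pi_div_two_le_of_le hlarge hbound
      _ ≤ Real.cos θ ^ α := Real.rpow_nonneg hcos α

theorem re_rpow_eq_norm_rpow_mul_cos_arg_rpow {z : ℂ} (hz : 0 ≤ z.re) (α : ℝ) :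
    z.re ^ α = ‖z‖ ^ α * Real.cos z.arg ^ α := by
  have hcos : 0 ≤ Real.cos z.arg :=
    Real.cos_nonneg_of_mem_Icc (abs_le.mp (abs_arg_le_pi_div_two_iff.2 hz))
  rw [← Real.mul_rpow (norm_nonneg z) hcos, norm_mul_cos_arg]

theorem re_rpow_le_re_cpow {α : ℝ} (hα₀ : 0 ≤ α) (hα₁ : α ≤ 1) {z : ℂ} (hz : 0 ≤ z.re) :
    z.re ^ α ≤ (z ^ (α : ℂ)).re := by
  rw [re_rpow_eq_norm_rpow_mul_cos_arg_rpow hz, cpow_ofReal_re, mul_comm z.arg]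
  gcongr
  exact cos_rpow_le_cos_mul hα₀ hα₁ (abs_arg_le_pi_div_two_iff.2 hz)

theorem re_cpow_le_re_rpow {α : ℝ} (hα₁ : 1 ≤ α) (hα₃ : α ≤ 3) {z : ℂ} (hz : 0 ≤ z.re) :
    (z ^ (α : ℂ)).re ≤ z.re ^ α := by
  rw [re_rpow_eq_norm_rpow_mul_cos_arg_rpow hz, cpow_ofReal_re, mul_comm z.arg]
  gcongr
  exact cos_mul_le_cos_rpow hα₁ hα₃ (abs_arg_le_pi_div_two_iff.2 hz)

theorem Ssym_re_nonneg {α lam : ℝ} (hα₀ : 0 ≤ α) (hα₂ : α < 2) (hlam : 0 ≤ lam) (ξ : ℝ) :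
    0 ≤ (Ssym α lam ξ).re := by
  have hplus : ((lam : ℂ) + I * ξ).re = lam := by simp
  have hminus : ((lam : ℂ) - I * ξ).re = lam := by simp
  have hpow : ((lam : ℂ) ^ (α : ℂ)).re = lam ^ α := by rw [← ofReal_cpow hlam, ofReal_re]
  rcases lt_or_ge α 1 with hα₁ | hα₁
  · have hfloor : ⌊α⌋ = 0 := Int.floor_eq_zero_iff.2 ⟨hα₀, hα₁⟩
    have hle₁ := re_rpow_le_re_cpow hα₀ hα₁.le (hlam.trans_eq hplus.symm)
    have hle₂ := re_rpow_le_re_cpow hα₀ hα₁.le (hlam.trans_eq hminus.symm)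
    rw [hplus] at hle₁
    rw [hminus] at hle₂
    simp only [Ssym, hfloor, zpow_zero, one_mul, sub_re, add_re, mul_re, re_ofNat, im_ofNat,
      zero_mul, sub_zero, hpow]
    linarith
  · have hfloor : ⌊α⌋ = 1 := Int.floor_eq_iff.2 ⟨by simpa using hα₁, by norm_num; linarith⟩
    have hle₁ := re_cpow_le_re_rpow hα₁ (by linarith) (hlam.trans_eq hplus.symm)
    have hle₂ := re_cpow_le_re_rpow hα₁ (by linarith) (hlam.trans_eq hminus.symm)
    rw [hplus] at hle₁
    rw [hminus] at hle₂
    simp only [Ssym, hfloor, zpow_one, neg_one_mul, neg_re, sub_re, add_re, mul_re, re_ofNat,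
      im_ofNat, zero_mul, sub_zero, hpow]
    linarith

theorem Ssym_neg (α lam ξ : ℝ) : Ssym α lam (-ξ) = Ssym α lam ξ := by
  simp only [Ssym, ofReal_neg, mul_neg, sub_neg_eq_add, ← sub_eq_add_neg]
  rw [add_comm (((lam : ℂ) - I * ξ) ^ (α : ℂ))]

theorem continuous_cpow_const_of_re_nonneg {X : Type*} [TopologicalSpace X] {f : X → ℂ}
    (hf : Continuous f) (hre : ∀ x, 0 ≤ (f x).re) {w : ℂ} (hw : 0 < w.re) :
    Continuous fun x => f x ^ w :=
  continuous_iff_continuousAt.2 fun x =>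
    ContinuousAt.comp (f := f) (continuousAt_cpow_const_of_re_pos (Or.inl (hre x)) hw)
      hf.continuousAt

theorem continuous_Ssym {α lam : ℝ} (hα : 0 < α) (hlam : 0 ≤ lam) : Continuous (Ssym α lam) := by
  have hplus : Continuous fun ξ : ℝ => ((lam : ℂ) + I * ξ) ^ (α : ℂ) :=
    continuous_cpow_const_of_re_nonneg (by fun_prop) (by simpa using hlam) (by simpa using hα)
  have hminus : Continuous fun ξ : ℝ => ((lam : ℂ) - I * ξ) ^ (α : ℂ) :=
    continuous_cpow_const_of_re_nonneg (by fun_prop) (by simpa using hlam) (by simpa using hα)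
  unfold Ssym
  fun_prop

theorem psi4_zero_right (h : ℝ) : psi4 h 0 = 0 := by
  norm_num [psi4]

theorem psi4_nonneg (h ξ : ℝ) : 0 ≤ psi4 h ξ := by
  have hfactor : psi4 h ξ =
      (1 - Real.cos (ξ * h)) * (7 - Real.cos (ξ * h)) / 3 / h ^ 2 := by
    rw [psi4, mul_assoc 2 ξ h, Real.cos_two_mul]
    ring
  have hcos := Real.cos_le_one (ξ * h)
  rw [hfactor]
  have : 0 ≤ 1 - Real.cos (ξ * h) := by linarith
  have : 0 ≤ 7 - Real.cos (ξ * h) := by linarith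
  positivity

theorem continuous_psi4 (h : ℝ) : Continuous (psi4 h) := by
  unfold psi4
  fun_prop

-- The jump of `sign` at the origin is harmless because `Ssym` is even in the frequency.
theorem SsymH_eq_Ssym_sqrt_psi4 (α lam h ξ : ℝ) :
    SsymH α lam h ξ = Ssym α lam √(psi4 h ξ) := by
  rcases lt_trichotomy ξ 0 with hξ | rfl | hξ
  · rw [SsymH, xiH, Real.sign_of_neg hξ, neg_one_mul, Ssym_neg]
  · simp only [SsymH, xiH, psi4_zero_right, Real.sqrt_zero, mul_zero]
  · rw [SsymH, xiH, Real.sign_of_pos hξ, one_mul]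

theorem continuous_SsymH {α lam : ℝ} (hα : 0 < α) (hlam : 0 ≤ lam) (h : ℝ) :
    Continuous (SsymH α lam h) := by
  rw [funext (SsymH_eq_Ssym_sqrt_psi4 α lam h)]
  exact (continuous_Ssym hα hlam).comp (continuous_psi4 h).sqrt

/-- The semidiscrete Fourier transform `ǔ(ξ) = h Σ_k u_k e^{-iξkh}` of a function on the grid `hℤ`,
which is identified with `ℤ`. -/
noncomputable def semidiscreteFourier (h : ℝ) (u : ℤ → ℂ) (ξ : ℝ) : ℂ :=
  h * ∑' k : ℤ, u k * exp (-(I * ξ * k * h))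

/-- The Fourier multiplier with symbol `m` on the grid `hℤ`: the inverse semidiscrete Fourier
transform of `m ǔ`. Only the values of `m` on `[-π/h, π/h]` matter. -/
noncomputable def gridMultiplier (h : ℝ) (m : ℝ → ℂ) (u : ℤ → ℂ) (j : ℤ) : ℂ :=
  (1 / (2 * Real.pi) : ℝ) * ∫ ξ in (-(Real.pi / h))..(Real.pi / h),
    m ξ * semidiscreteFourier h u ξ * exp (I * ξ * j * h)

theorem A0_eq_gridMultiplier (α lam h : ℝ) (u : ℤ → ℝ) (j : ℤ) :
    A0 α lam h u j = gridMultiplier h (SsymH α lam h) (fun k => u k) j :=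
  rfl

theorem integral_exp_I_mul_int {h : ℝ} (hh : h ≠ 0) (n : ℤ) :
    ∫ ξ in (-(Real.pi / h))..(Real.pi / h), exp (I * ξ * n * h) =
      if n = 0 then (2 * Real.pi / h : ℂ) else 0 := by
  have hh' : (h : ℂ) ≠ 0 := ofReal_ne_zero.2 hh
  split_ifs with hn
  · simp only [hn, Int.cast_zero, mul_zero, zero_mul, exp_zero, intervalIntegral.integral_const,
      sub_neg_eq_add, real_smul, ofReal_add, ofReal_div, mul_one]
    ring
  · have hc : I * n * h ≠ 0 := by simp [hn, hh]
    have hperiod : exp (I * n * h * (Real.pi / h : ℝ)) = exp (I * n * h * (-(Real.pi / h) : ℝ)) :=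
      exp_eq_exp_iff_exists_int.2 ⟨n, by push_cast; field_simp; ring⟩
    calc ∫ ξ in (-(Real.pi / h))..(Real.pi / h), exp (I * ξ * n * h)
        = ∫ ξ in (-(Real.pi / h))..(Real.pi / h), exp (I * n * h * ξ) := by
          congr 1 with ξ
          ring_nf
      _ = 0 := by rw [integral_exp_mul_complex hc, hperiod, sub_self, zero_div]

section FiniteSupport

variable {J : Finset ℤ} {u : ℤ → ℂ}

theorem semidiscreteFourier_eq_sum (h : ℝ) (hu : ∀ k ∉ J, u k = 0) (ξ : ℝ) :
    semidiscreteFourier h u ξ = h * ∑ k ∈ J, u k * exp (-(I * ξ * k * h)) := by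
  rw [semidiscreteFourier, tsum_eq_sum fun k hk => by rw [hu k hk, zero_mul]]

theorem continuous_semidiscreteFourier (h : ℝ) (hu : ∀ k ∉ J, u k = 0) :
    Continuous (semidiscreteFourier h u) := by
  rw [funext (semidiscreteFourier_eq_sum h hu)]
  fun_prop

theorem conj_semidiscreteFourier (h : ℝ) (hu : ∀ k ∉ J, u k = 0) (ξ : ℝ) :
    conj (semidiscreteFourier h u ξ) = h * ∑ k ∈ J, conj (u k) * exp (I * ξ * k * h) := by
  simp [semidiscreteFourier_eq_sum h hu, ← exp_conj]

theorem semidiscreteFourier_inversion {h : ℝ} (hh : h ≠ 0) (hu : ∀ k ∉ J, u k = 0) (j : ℤ) :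
    (1 / (2 * Real.pi) : ℝ) * ∫ ξ in (-(Real.pi / h))..(Real.pi / h),
      semidiscreteFourier h u ξ * exp (I * ξ * j * h) = u j := by
  have hexpand (ξ : ℝ) : semidiscreteFourier h u ξ * exp (I * ξ * j * h) =
      ∑ k ∈ J, h * u k * exp (I * ξ * (j - k : ℤ) * h) := by
    rw [semidiscreteFourier_eq_sum h hu, Finset.mul_sum, Finset.sum_mul]
    refine Finset.sum_congr rfl fun k _ => ?_
    rw [← mul_assoc, mul_assoc _ (exp _), ← exp_add]
    push_cast
    ring_nf
  have hh' : (h : ℂ) ≠ 0 := ofReal_ne_zero.2 hh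
  simp_rw [hexpand]
  rw [intervalIntegral.integral_finsetSum fun k _ =>
    Continuous.intervalIntegrable (by fun_prop) _ _]
  simp_rw [intervalIntegral.integral_const_mul, integral_exp_I_mul_int hh, sub_eq_zero, mul_ite,
    mul_zero, Finset.sum_ite_eq]
  split_ifs with hj
  · push_cast
    field_simp
  · rw [hu j hj, mul_zero]

theorem gridMultiplier_sum_mul_exp {ι : Type*} {h : ℝ} (hh : h ≠ 0) (hu : ∀ k ∉ J, u k = 0)
    (s : Finset ι) (c : ι → ℂ) (d : ι → ℤ) (j : ℤ) :
    gridMultiplier h (fun ξ => ∑ i ∈ s, c i * exp (I * ξ * d i * h)) u j =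
      ∑ i ∈ s, c i * u (j + d i) := by
  have hexpand (ξ : ℝ) :
      (∑ i ∈ s, c i * exp (I * ξ * d i * h)) * semidiscreteFourier h u ξ * exp (I * ξ * j * h) =
        ∑ i ∈ s, c i * (semidiscreteFourier h u ξ * exp (I * ξ * (j + d i : ℤ) * h)) := by
    rw [Finset.sum_mul, Finset.sum_mul]
    refine Finset.sum_congr rfl fun i _ => ?_
    have hexp : exp (I * ξ * (j + d i : ℤ) * h) =
        exp (I * ξ * d i * h) * exp (I * ξ * j * h) := by
      rw [← exp_add]
      push_cast
      ring_nf
    rw [hexp]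
    ring
  have hcont := continuous_semidiscreteFourier h hu
  simp_rw [gridMultiplier, hexpand]
  rw [intervalIntegral.integral_finsetSum fun i _ =>
    Continuous.intervalIntegrable (by fun_prop) _ _, Finset.mul_sum]
  refine Finset.sum_congr rfl fun i _ => ?_
  rw [intervalIntegral.integral_const_mul, mul_left_comm, semidiscreteFourier_inversion hh hu]

theorem sum_conj_mul_gridMultiplier {h : ℝ} (hh : h ≠ 0) (hu : ∀ k ∉ J, u k = 0) {m : ℝ → ℂ}
    (hm : IntervalIntegrable m volume (-(Real.pi / h)) (Real.pi / h)) :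
    ∑ j ∈ J, conj (u j) * gridMultiplier h m u j =
      (1 / (2 * Real.pi * h) : ℝ) * ∫ ξ in (-(Real.pi / h))..(Real.pi / h),
        m ξ * (normSq (semidiscreteFourier h u ξ) : ℂ) := by
  have hcont := continuous_semidiscreteFourier h hu
  have hscale : (h : ℂ) * (1 / (2 * Real.pi * h) : ℝ) = (1 / (2 * Real.pi) : ℝ) := by
    rw [← ofReal_mul]
    congr 1
    field_simp
  have hintegrand (ξ : ℝ) : m ξ * (normSq (semidiscreteFourier h u ξ) : ℂ) =
      ∑ j ∈ J, h * conj (u j) * (m ξ * semidiscreteFourier h u ξ * exp (I * ξ * j * h)) := by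
    rw [← mul_conj, conj_semidiscreteFourier h hu, Finset.mul_sum, Finset.mul_sum, Finset.mul_sum]
    exact Finset.sum_congr rfl fun j _ => by ring
  have hintegrable (j : ℤ) : IntervalIntegrable
      (fun ξ : ℝ => m ξ * semidiscreteFourier h u ξ * exp (I * ξ * j * h)) volume
      (-(Real.pi / h)) (Real.pi / h) :=
    (hm.mul_continuousOn hcont.continuousOn).mul_continuousOn
      (Continuous.continuousOn (by fun_prop))
  simp_rw [hintegrand]
  rw [intervalIntegral.integral_finsetSum fun j _ => (hintegrable j).const_mul _, Finset.mul_sum]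
  refine Finset.sum_congr rfl fun j _ => ?_
  rw [intervalIntegral.integral_const_mul, gridMultiplier, ← hscale]
  ring

theorem re_sum_conj_mul_gridMultiplier_nonneg {h : ℝ} (hh : 0 < h) (hu : ∀ k ∉ J, u k = 0)
    {m : ℝ → ℂ} (hm : IntervalIntegrable m volume (-(Real.pi / h)) (Real.pi / h))
    (hm₀ : ∀ ξ ∈ Set.Icc (-(Real.pi / h)) (Real.pi / h), 0 ≤ (m ξ).re) :
    0 ≤ (∑ j ∈ J, conj (u j) * gridMultiplier h m u j).re := by
  have hpos : 0 < Real.pi / h := by positivity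
  have hcont := continuous_semidiscreteFourier h hu
  have hintegrable : IntervalIntegrable
      (fun ξ => m ξ * (normSq (semidiscreteFourier h u ξ) : ℂ)) volume
      (-(Real.pi / h)) (Real.pi / h) :=
    hm.mul_continuousOn
      (continuous_ofReal.comp (continuous_normSq.comp hcont)).continuousOn
  rw [sum_conj_mul_gridMultiplier hh.ne' hu hm, re_ofReal_mul, ← reCLM_apply,
    ← reCLM.intervalIntegral_comp_comm hintegrable]
  refine mul_nonneg (by positivity) (intervalIntegral.integral_nonneg (by linarith) fun ξ hξ => ?_)
  rw [reCLM_apply, re_mul_ofReal]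
  exact mul_nonneg (hm₀ ξ hξ) (normSq_nonneg _)

end FiniteSupport

theorem psi4_eq_sum_mul_exp (h ξ : ℝ) :
    (psi4 h ξ : ℂ) = ∑ i : Fin 5, ![1 / 12, -4 / 3, 5 / 2, -4 / 3, 1 / 12] i / (h : ℂ) ^ 2 *
      exp (I * ξ * (![-2, -1, 0, 1, 2] i : ℤ) * h) := by
  simp only [psi4, Fin.sum_univ_five]
  push_cast [Complex.cos]
  simp only [mul_neg, neg_mul, mul_one, mul_zero, zero_mul, exp_zero]
  ring_nf

section RealGridFunction

variable {J : Finset ℤ} {u : ℤ → ℝ}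

theorem A1_eq_gridMultiplier {h : ℝ} (hh : h ≠ 0) (hu : ∀ k ∉ J, u k = 0) (j : ℤ) :
    (A1 h u j : ℂ) = gridMultiplier h (fun ξ => psi4 h ξ) (fun k => u k) j := by
  have hu' : ∀ k ∉ J, (u k : ℂ) = 0 := fun k hk => ofReal_eq_zero.2 (hu k hk)
  simp_rw [psi4_eq_sum_mul_exp]
  rw [gridMultiplier_sum_mul_exp hh hu']
  simp only [A1, Fin.sum_univ_five, Fin.isValue, Matrix.cons_val, add_zero, ← sub_eq_add_neg]
  push_cast
  ring

theorem sum_mul_re_A0_nonneg {α lam h : ℝ} (hα₀ : 0 < α) (hα₂ : α < 2) (hlam : 0 ≤ lam)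
    (hh : 0 < h) (hu : ∀ k ∉ J, u k = 0) : 0 ≤ ∑ j ∈ J, u j * (A0 α lam h u j).re := by
  have hform := re_sum_conj_mul_gridMultiplier_nonneg (u := fun k => (u k : ℂ)) hh
    (fun k hk => ofReal_eq_zero.2 (hu k hk))
    ((continuous_SsymH hα₀ hlam h).intervalIntegrable _ _)
    fun ξ _ => Ssym_re_nonneg hα₀.le hα₂ hlam (xiH h ξ)
  simpa only [← A0_eq_gridMultiplier, conj_ofReal, re_sum, re_ofReal_mul] using hform

theorem sum_mul_A1_nonneg {h : ℝ} (hh : 0 < h) (hu : ∀ k ∉ J, u k = 0) :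
    0 ≤ ∑ j ∈ J, u j * A1 h u j := by
  have hform := re_sum_conj_mul_gridMultiplier_nonneg (u := fun k => (u k : ℂ)) hh
    (fun k hk => ofReal_eq_zero.2 (hu k hk))
    ((continuous_ofReal.comp (continuous_psi4 h)).intervalIntegrable _ _) fun ξ _ => psi4_nonneg h ξ
  simpa only [Function.comp_def, ← A1_eq_gridMultiplier hh.ne' hu, conj_ofReal, re_sum,
    re_ofReal_mul, ofReal_re] using hform

end RealGridFunction

theorem sq_mul_sum_sq_le_sum_add_mul_sq {ι : Type*} {s : Finset ι} {u w : ι → ℝ} {ν : ℝ}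
    (hν : 0 ≤ ν) (huw : 0 ≤ ∑ i ∈ s, u i * w i) :
    ν ^ 2 * ∑ i ∈ s, u i ^ 2 ≤ ∑ i ∈ s, (w i + ν * u i) ^ 2 := by
  have hexpand : ∑ i ∈ s, (w i + ν * u i) ^ 2 =
      ∑ i ∈ s, w i ^ 2 + 2 * ν * ∑ i ∈ s, u i * w i + ν ^ 2 * ∑ i ∈ s, u i ^ 2 := by
    simp only [Finset.mul_sum, ← Finset.sum_add_distrib]
    exact Finset.sum_congr rfl fun i _ => by ring
  rw [hexpand]
  have : 0 ≤ ∑ i ∈ s, w i ^ 2 := Finset.sum_nonneg fun i _ => sq_nonneg (w i)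
  exact le_add_of_nonneg_left (by positivity)

/-- Stability of the fourth-order finite difference method (`d = 1`, `l²`-bound):
if `u` vanishes outside a finite index set `J` and
`(A₀u)_j + σ(A₁u)_j + ν u_j = f_j` for all `j ∈ J`, then
`ν²·h·Σ_{j∈ℤ} u_j² ≤ h·Σ_{j∈J} f_j²`. -/
theorem fourth_order_stability (α lam σ ν h : ℝ)
    (hα : α ∈ Set.Ioo (0:ℝ) 1 ∪ Set.Ioo (1:ℝ) 2) (hlam : 0 ≤ lam)
    (hσ : 0 ≤ σ) (hν : 0 < ν) (hh : 0 < h)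
    (J : Finset ℤ) (u f : ℤ → ℝ) (hsupp : ∀ j ∉ J, u j = 0)
    (heq : ∀ j ∈ J, A0 α lam h u j + (σ : ℂ) * (A1 h u j : ℝ) + (ν : ℂ) * (u j : ℝ) = (f j : ℝ)) :
    ν^2 * (h * ∑' j : ℤ, (u j)^2) ≤ h * ∑ j ∈ J, (f j)^2 := by
  have hα' : 0 < α ∧ α < 2 := by rcases hα with hα | hα <;> constructor <;> linarith [hα.1, hα.2]
  set w : ℤ → ℝ := fun j => (A0 α lam h u j).re + σ * A1 h u j
  have hw : 0 ≤ ∑ j ∈ J, u j * w j := by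
    have hA0 := sum_mul_re_A0_nonneg hα'.1 hα'.2 hlam hh hsupp
    have hA1 := sum_mul_A1_nonneg hh hsupp
    simp only [w, mul_add, Finset.sum_add_distrib, mul_left_comm _ σ, ← Finset.mul_sum]
    positivity
  have hf (j : ℤ) (hj : j ∈ J) : w j + ν * u j = f j := by
    simpa only [add_re, re_ofReal_mul, ofReal_re] using congrArg re (heq j hj)
  calc ν ^ 2 * (h * ∑' j : ℤ, u j ^ 2) = h * (ν ^ 2 * ∑ j ∈ J, u j ^ 2) := by
        rw [tsum_eq_sum fun j hj => by rw [hsupp j hj, zero_pow two_ne_zero], mul_left_comm]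
    _ ≤ h * ∑ j ∈ J, (w j + ν * u j) ^ 2 := by
        gcongr
        exact sq_mul_sum_sq_le_sum_add_mul_sq hν.le hw
    _ = h * ∑ j ∈ J, f j ^ 2 := by rw [Finset.sum_congr rfl fun j hj => by rw [hf j hj]]
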